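/- Let (p₁,p₂,p₃,p₄) and (q₁,q₂,q₃,q₄) be admissible quadruples. Suppose that for every α > 0 and every h ∈ C₀([0,∞)) the cross-multiplied identity (2p₂·∫₀^∞ e^{−√(2α)x}h(x)dx + p₃·h(0) + ∫_{(0,∞)} G⁰_α h dp₄)·(q₁ + √(2α)·q₂ + α·q₃ + ∫_{(0,∞)}(1 − e^{−√(2α)x}) dq₄) = (2q₂·∫₀^∞ e^{−√(2α)x}h(x)dx + q₃·h(0) + ∫_{(0,∞)} G⁰_α h dq₄)·(p₁ + √(2α)·p₂ + α·p₃ + ∫_{(0,∞)}(1 − e^{−√(2α)x}) dp₄) holds. Then p₁ = q₁, p₂ = q₂, p₃ = q₃, and p₄ = q₄ as measures. (Uniqueness of the four boundary parameters of a Feller's Brownian motion.) -/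

import Mathlib

open MeasureTheory Real Filter Topology

/-- The resolvent density of killed Brownian motion on `(0,∞)`. -/
noncomputable def g0 (α x y : ℝ) : ℝ :=
  (2 / Real.sqrt (2 * α)) * Real.sinh (Real.sqrt (2 * α) * min x y) *
    Real.exp (-(Real.sqrt (2 * α) * max x y))

/-- The resolvent `G⁰_α h` of killed Brownian motion on `(0,∞)`. -/
noncomputable def G0 (α : ℝ) (h : ℝ → ℝ) (x : ℝ) : ℝ :=
  ∫ y in Set.Ioi (0 : ℝ), g0 α x y * h y

/-- `h ∈ C₀([0,∞))`: continuous on `[0,∞)` and vanishing at infinity. -/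
def MemC0 (h : ℝ → ℝ) : Prop :=
  ContinuousOn h (Set.Ici 0) ∧ Filter.Tendsto h Filter.atTop (nhds 0)

/-- An admissible quadruple `(p₁,p₂,p₃,p₄)`: `p₁,p₂,p₃ ≥ 0`, `p₄` a positive Borel
measure carried by `(0,∞)` with `∫ min(1,x) p₄(dx) < ∞`, normalized by
`p₁+p₂+p₃+∫ min(x,1) p₄(dx) = 1`, and `|p₄| = ∞` whenever `p₂ = p₃ = 0`. -/
def IsAdmissible (p₁ p₂ p₃ : ℝ) (p₄ : Measure ℝ) : Prop :=
  0 ≤ p₁ ∧ 0 ≤ p₂ ∧ 0 ≤ p₃ ∧ p₄ (Set.Iic 0) = 0 ∧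
  (∫⁻ x in Set.Ioi (0 : ℝ), ENNReal.ofReal (min 1 x) ∂p₄) < ⊤ ∧
  p₁ + p₂ + p₃ + (∫ x in Set.Ioi (0 : ℝ), min x 1 ∂p₄) = 1 ∧
  (p₂ = 0 ∧ p₃ = 0 → p₄ (Set.Ioi 0) = ⊤)

/-!
On the exponentials `e_γ(x) = exp (-√(2γ) x)` the killed resolvent is explicit,
`G⁰_α e_γ = (e_γ - e_α) / (α - γ)`, so the numerator of the resolvent at `0` of the process,
evaluated at `e_γ`, is `(D α - D γ) / (α - γ)`, where `D` is the denominator. The cross-multiplied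
identity for a single `γ` therefore says that the two denominators are proportional. A denominator
determines its quadruple: the constants are read off from its behaviour as `α → 0` and `α → ∞`,
and the measure from the uniqueness of Laplace transforms. So the two quadruples are proportional,
and the normalization makes the factor `1`.
-/

section Moments

open scoped BoundedContinuousFunction

theorem ext_of_forall_integral_pow_eq {E : Type*} [TopologicalSpace E] [PolishSpace E]
    [MeasurableSpace E] [BorelSpace E] {μ ν : Measure E} [IsFiniteMeasure μ] [IsFiniteMeasure ν]
    (φ : E →ᵇ ℝ) (hφ : Function.Injective φ)
    (h : ∀ n : ℕ, ∫ x, φ x ^ n ∂μ = ∫ x, φ x ^ n ∂ν) : μ = ν := by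
  let A : StarSubalgebra ℝ (E →ᵇ ℝ) :=
    { Algebra.adjoin ℝ {φ} with
      star_mem' := fun {g} hg ↦ by
        rwa [show star g = g from DFunLike.ext _ _ fun x ↦ by simp] }
  have hφA : φ ∈ A := Algebra.self_mem_adjoin_singleton ℝ φ
  refine ext_of_forall_mem_subalgebra_integral_eq_of_polish (𝕜 := ℝ) (A := A) ?_ ?_
  · exact fun x y hxy ↦ ⟨φ, ⟨φ, ⟨φ, hφA, rfl⟩, rfl⟩, hφ.ne hxy⟩
  · intro g hg
    obtain ⟨p, rfl⟩ : ∃ p : Polynomial ℝ, Polynomial.aeval φ p = g := by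
      rwa [← AlgHom.mem_range, ← Algebra.adjoin_singleton_eq_range_aeval]
    clear hg
    induction p using Polynomial.induction_on' with
    | add p q hp hq =>
      have hadd (ρ : Measure E) [IsFiniteMeasure ρ] :
          ∫ x, Polynomial.aeval φ (p + q) x ∂ρ =
            ∫ x, Polynomial.aeval φ p x ∂ρ + ∫ x, Polynomial.aeval φ q x ∂ρ := by
        rw [map_add]
        exact integral_add ((Polynomial.aeval φ p).integrable ρ)
          ((Polynomial.aeval φ q).integrable ρ)
      rw [hadd μ, hadd ν, hp, hq]
    | monomial n a => simp [integral_const_mul, h]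

end Moments

section Laplace

open Set

theorem restrict_Ioi_eq_of_integral_exp_neg_eq {μ ν : Measure ℝ} (hμ : μ (Ioi 0) ≠ ⊤)
    (hν : ν (Ioi 0) ≠ ⊤)
    (h : ∀ n : ℕ, ∫ x in Ioi 0, exp (-(n * x)) ∂μ = ∫ x in Ioi 0, exp (-(n * x)) ∂ν) :
    μ.restrict (Ioi 0) = ν.restrict (Ioi 0) := by
  have : PolishSpace (Ioi (0 : ℝ)) := isOpen_Ioi.polishSpace
  have isFiniteMeasure_comap {ρ : Measure ℝ} (hρ : ρ (Ioi 0) ≠ ⊤) :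
      IsFiniteMeasure (ρ.comap ((↑) : Ioi (0 : ℝ) → ℝ)) :=
    ⟨by rwa [comap_subtype_coe_apply measurableSet_Ioi, Subtype.coe_image_univ, lt_top_iff_ne_top]⟩
  have := isFiniteMeasure_comap hμ
  have := isFiniteMeasure_comap hν
  let φ : BoundedContinuousFunction (Ioi (0 : ℝ)) ℝ :=
    .ofNormedAddCommGroup (fun x ↦ exp (-x)) (by fun_prop) 1 fun x ↦ by
      simpa using (mem_Ioi.mp x.2).le
  have hφ : Function.Injective φ := fun x y hxy ↦
    Subtype.ext (neg_injective (exp_injective hxy))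
  have integral_φ_pow (ρ : Measure ℝ) (n : ℕ) :
      ∫ x, φ x ^ n ∂(ρ.comap ((↑) : Ioi (0 : ℝ) → ℝ)) = ∫ x in Ioi 0, exp (-(n * x)) ∂ρ := by
    rw [← integral_subtype_comap measurableSet_Ioi]
    simp [φ, ← exp_nat_mul]
  have hcomap : μ.comap ((↑) : Ioi (0 : ℝ) → ℝ) = ν.comap (↑) :=
    ext_of_forall_integral_pow_eq φ hφ fun n ↦ by rw [integral_φ_pow, integral_φ_pow, h]
  rw [← map_comap_subtype_coe measurableSet_Ioi, ← map_comap_subtype_coe measurableSet_Ioi, hcomap]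

/-- The Laplace exponent `s ↦ ∫_{(0,∞)} (1 - e^{-sx}) μ(dx)` of the driftless subordinator with
Lévy measure `μ`, the jump part of the denominator of the resolvent. Only the part of `μ` carried
by `(0,∞)` enters. -/
noncomputable def laplaceExponent (μ : Measure ℝ) (s : ℝ) : ℝ :=
  ∫ x in Ioi 0, (1 - exp (-(s * x))) ∂μ

variable {μ ν : Measure ℝ} {s x : ℝ}

lemma one_sub_exp_neg_mul_nonneg (hs : 0 ≤ s) (hx : 0 ≤ x) : 0 ≤ 1 - exp (-(s * x)) := by
  simpa using mul_nonneg hs hx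

lemma one_sub_exp_neg_mul_le (hx : 0 ≤ x) :
    1 - exp (-(s * x)) ≤ max s 1 * min x 1 := by
  rcases le_total x 1 with hx1 | hx1
  · rw [min_eq_left hx1]
    calc 1 - exp (-(s * x)) ≤ s * x := by linarith [one_sub_le_exp_neg (s * x)]
      _ ≤ max s 1 * x := by gcongr; exact le_max_left s 1
  · rw [min_eq_right hx1, mul_one]
    exact (sub_le_self 1 (exp_pos _).le).trans (le_max_right s 1)

lemma le_one_sub_exp_neg_mul (hs : 0 ≤ s) (hx : 0 ≤ x) :
    (1 - exp (-s)) * min x 1 ≤ 1 - exp (-(s * x)) := by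
  rcases le_total x 1 with hx1 | hx1
  · rw [min_eq_left hx1]
    have hconv := convexOn_exp.2 (mem_univ (-s)) (mem_univ 0) hx (sub_nonneg.2 hx1) (by ring)
    simp only [smul_eq_mul, mul_zero, add_zero, exp_zero, mul_one, mul_neg, mul_comm x s] at hconv
    linarith
  · rw [min_eq_right hx1, mul_one]
    gcongr
    exact le_mul_of_one_le_right hs hx1

lemma integrableOn_one_sub_exp_neg_mul (hμ : IntegrableOn (fun x ↦ min x 1) (Ioi 0) μ)
    (hs : 0 ≤ s) : IntegrableOn (fun x ↦ 1 - exp (-(s * x))) (Ioi 0) μ := by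
  refine (hμ.const_mul (max s 1)).mono' (by fun_prop) ?_
  filter_upwards [ae_restrict_mem measurableSet_Ioi] with x hx
  rw [norm_of_nonneg (one_sub_exp_neg_mul_nonneg hs (le_of_lt hx))]
  exact one_sub_exp_neg_mul_le (le_of_lt hx)

lemma le_laplaceExponent (hμ : IntegrableOn (fun x ↦ min x 1) (Ioi 0) μ) (hs : 0 ≤ s) :
    (1 - exp (-s)) * ∫ x in Ioi 0, min x 1 ∂μ ≤ laplaceExponent μ s := by
  rw [laplaceExponent, ← integral_const_mul]
  exact setIntegral_mono_on (hμ.const_mul _) (integrableOn_one_sub_exp_neg_mul hμ hs)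
    measurableSet_Ioi fun x hx ↦ le_one_sub_exp_neg_mul hs (le_of_lt hx)

lemma tendsto_laplaceExponent_nhdsGT_zero (hμ : IntegrableOn (fun x ↦ min x 1) (Ioi 0) μ) :
    Tendsto (laplaceExponent μ) (𝓝[>] 0) (𝓝 0) := by
  suffices Tendsto (laplaceExponent μ) (𝓝[>] 0) (𝓝 (∫ _ in Ioi (0 : ℝ), (0 : ℝ) ∂μ)) by
    simpa using this
  refine tendsto_integral_filter_of_dominated_convergence (fun x ↦ min x 1)
    (.of_forall fun s ↦ by fun_prop) ?_ hμ (.of_forall fun x ↦ ?_)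
  · filter_upwards [Ioo_mem_nhdsGT (zero_lt_one' ℝ)] with s hs
    filter_upwards [ae_restrict_mem measurableSet_Ioi] with x hx
    rw [norm_of_nonneg (one_sub_exp_neg_mul_nonneg hs.1.le (le_of_lt hx))]
    simpa only [max_eq_right hs.2.le, one_mul] using one_sub_exp_neg_mul_le (s := s) (le_of_lt hx)
  · have hcont : Continuous fun s : ℝ ↦ 1 - exp (-(s * x)) := by fun_prop
    simpa using (hcont.tendsto 0).mono_left nhdsWithin_le_nhds

lemma tendsto_laplaceExponent_div_atTop (hμ : IntegrableOn (fun x ↦ min x 1) (Ioi 0) μ) :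
    Tendsto (fun s ↦ laplaceExponent μ s / s) atTop (𝓝 0) := by
  suffices Tendsto (fun s ↦ ∫ x in Ioi 0, (1 - exp (-(s * x))) / s ∂μ) atTop
      (𝓝 (∫ _ in Ioi (0 : ℝ), (0 : ℝ) ∂μ)) by
    simpa [integral_div, laplaceExponent] using this
  refine tendsto_integral_filter_of_dominated_convergence (fun x ↦ min x 1)
    (.of_forall fun s ↦ by fun_prop) ?_ hμ ?_
  · filter_upwards [eventually_ge_atTop 1] with s hs
    filter_upwards [ae_restrict_mem measurableSet_Ioi] with x hx
    have hs0 : 0 < s := one_pos.trans_le hs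
    have hnonneg := one_sub_exp_neg_mul_nonneg hs0.le (le_of_lt hx)
    rw [norm_of_nonneg (by positivity), div_le_iff₀' hs0]
    simpa only [max_eq_left hs] using one_sub_exp_neg_mul_le (s := s) (le_of_lt hx)
  · filter_upwards [ae_restrict_mem measurableSet_Ioi] with x hx
    refine tendsto_bdd_div_atTop_nhds_zero (b := 0) (B := 1) ?_ ?_ tendsto_id
    · filter_upwards [eventually_ge_atTop 0] with s hs
      exact one_sub_exp_neg_mul_nonneg hs (le_of_lt hx)
    · exact .of_forall fun s ↦ sub_le_self 1 (exp_pos _).le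

lemma laplaceExponent_smul (c : NNReal) :
    laplaceExponent (c • μ) s = c * laplaceExponent μ s := by
  rw [laplaceExponent, Measure.restrict_smul, integral_smul_nnreal_measure]
  rfl

lemma setIntegral_exp_neg_mul_withDensity (hμ : IntegrableOn (fun x ↦ min x 1) (Ioi 0) μ)
    (hs : 0 ≤ s) :
    ∫ x in Ioi 0, exp (-(s * x)) ∂μ.withDensity (fun x ↦ ENNReal.ofReal (1 - exp (-x))) =
      laplaceExponent μ (s + 1) - laplaceExponent μ s := by
  rw [setIntegral_withDensity_eq_setIntegral_toReal_smul (by fun_prop)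
      (.of_forall fun x ↦ ENNReal.ofReal_lt_top) _ measurableSet_Ioi,
    laplaceExponent, laplaceExponent,
    ← integral_sub (integrableOn_one_sub_exp_neg_mul hμ (by positivity))
      (integrableOn_one_sub_exp_neg_mul hμ hs)]
  refine setIntegral_congr_fun measurableSet_Ioi fun x hx ↦ ?_
  have hnonneg : 0 ≤ 1 - exp (-x) := by
    simpa using one_sub_exp_neg_mul_nonneg zero_le_one (le_of_lt hx)
  rw [ENNReal.toReal_ofReal hnonneg, show -((s + 1) * x) = -x + -(s * x) by ring, exp_add,
    smul_eq_mul]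
  ring

theorem restrict_Ioi_eq_of_laplaceExponent_eq
    (hμ : IntegrableOn (fun x ↦ min x 1) (Ioi 0) μ)
    (hν : IntegrableOn (fun x ↦ min x 1) (Ioi 0) ν)
    (h : ∀ s, 0 < s → laplaceExponent μ s = laplaceExponent ν s) :
    μ.restrict (Ioi 0) = ν.restrict (Ioi 0) := by
  let w : ℝ → ENNReal := fun x ↦ ENNReal.ofReal (1 - exp (-x))
  have hw : Measurable w := by fun_prop
  have withDensity_ne_top {ρ : Measure ℝ} (hρ : IntegrableOn (fun x ↦ min x 1) (Ioi 0) ρ) :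
      ρ.withDensity w (Ioi 0) ≠ ⊤ := by
    rw [withDensity_apply _ measurableSet_Ioi]
    simpa [w] using (integrableOn_one_sub_exp_neg_mul hρ zero_le_one).lintegral_lt_top.ne
  have withDensity_inv (ρ : Measure ℝ) :
      ((ρ.withDensity w).restrict (Ioi 0)).withDensity (fun x ↦ (w x)⁻¹) =
        ρ.restrict (Ioi 0) := by
    rw [restrict_withDensity measurableSet_Ioi]
    refine withDensity_inv_same hw ?_ (.of_forall fun x ↦ ENNReal.ofReal_ne_top)
    filter_upwards [ae_restrict_mem measurableSet_Ioi] with x hx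
    simpa [w] using hx
  have h' (n : ℕ) : laplaceExponent μ n = laplaceExponent ν n := by
    rcases n.eq_zero_or_pos with rfl | hn
    · simp [laplaceExponent]
    · exact h n (Nat.cast_pos.2 hn)
  have hw_eq : (μ.withDensity w).restrict (Ioi 0) = (ν.withDensity w).restrict (Ioi 0) := by
    refine restrict_Ioi_eq_of_integral_exp_neg_eq (withDensity_ne_top hμ) (withDensity_ne_top hν)
      fun n ↦ ?_
    rw [setIntegral_exp_neg_mul_withDensity hμ n.cast_nonneg,
      setIntegral_exp_neg_mul_withDensity hν n.cast_nonneg, h' n, h _ (by positivity)]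
  rw [← withDensity_inv μ, ← withDensity_inv ν, hw_eq]

end Laplace

section KilledResolvent

open Set

variable {α s b x y : ℝ}

lemma sq_sqrt_two_mul (hα : 0 ≤ α) : √(2 * α) ^ 2 = 2 * α :=
  sq_sqrt (by positivity)

lemma g0_of_le (h : y ≤ x) :
    g0 α x y = 2 / √(2 * α) * exp (-(√(2 * α) * x)) * sinh (√(2 * α) * y) := by
  rw [g0, min_eq_right h, max_eq_left h]
  ring

lemma g0_of_ge (h : x ≤ y) :
    g0 α x y = 2 / √(2 * α) * sinh (√(2 * α) * x) * exp (-(√(2 * α) * y)) := by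
  rw [g0, min_eq_left h, max_eq_right h]

lemma continuous_g0 : Continuous (g0 α x) := by
  unfold g0
  fun_prop

lemma integral_sinh_mul_exp_neg (h : s ^ 2 ≠ b ^ 2) :
    ∫ y in (0 : ℝ)..x, sinh (s * y) * exp (-(b * y)) =
      (exp (-(b * x)) * (s * cosh (s * x) + b * sinh (s * x)) - s) / (s ^ 2 - b ^ 2) := by
  have h0 : s ^ 2 - b ^ 2 ≠ 0 := sub_ne_zero.2 h
  have hderiv (y : ℝ) : HasDerivAt
      (fun y ↦ exp (-(b * y)) * (s * cosh (s * y) + b * sinh (s * y)) / (s ^ 2 - b ^ 2))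
      (sinh (s * y) * exp (-(b * y))) y := by
    have hs : HasDerivAt (fun y ↦ s * y) s y := by simpa using (hasDerivAt_id y).const_mul s
    have hb : HasDerivAt (fun y ↦ -(b * y)) (-b) y := by
      simpa using ((hasDerivAt_id y).const_mul b).fun_neg
    refine ((hb.exp.fun_mul ((hs.cosh.const_mul s).fun_add (hs.sinh.const_mul b))).div_const
      _).congr_deriv ?_
    field_simp
    ring
  rw [intervalIntegral.integral_eq_sub_of_hasDerivAt (fun y _ ↦ hderiv y)
    (Continuous.intervalIntegrable (by fun_prop) _ _)]
  simp [sub_div]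

lemma integrableOn_exp_neg_mul_exp_neg (h : 0 < s + b) :
    IntegrableOn (fun y ↦ exp (-(s * y)) * exp (-(b * y))) (Ioi x) := by
  simpa only [← exp_add, neg_add, neg_mul, add_mul] using
    integrableOn_exp_mul_Ioi (neg_lt_zero.2 h) x

lemma integral_Ioi_exp_neg_mul_exp_neg (h : 0 < s + b) :
    ∫ y in Ioi x, exp (-(s * y)) * exp (-(b * y)) = exp (-(s * x)) * exp (-(b * x)) / (s + b) := by
  simpa only [← exp_add, neg_add, neg_mul, add_mul, neg_div_neg_eq] using
    (integral_exp_mul_Ioi (neg_lt_zero.2 h) x).trans (neg_div_neg_eq _ _)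

lemma setIntegral_Ioc_g0_mul_exp_neg (h : √(2 * α) ^ 2 ≠ b ^ 2) (hx : 0 ≤ x) :
    ∫ y in Ioc 0 x, g0 α x y * exp (-(b * y)) =
      2 / √(2 * α) * exp (-(√(2 * α) * x)) *
        ((exp (-(b * x)) * (√(2 * α) * cosh (√(2 * α) * x) + b * sinh (√(2 * α) * x)) - √(2 * α)) /
          (√(2 * α) ^ 2 - b ^ 2)) := by
  rw [← integral_sinh_mul_exp_neg h, intervalIntegral.integral_of_le hx, ← integral_const_mul]
  refine setIntegral_congr_fun measurableSet_Ioc fun y hy ↦ ?_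
  rw [g0_of_le hy.2]
  ring

lemma g0_mul_exp_neg_of_mem_Ioi (hy : y ∈ Ioi x) :
    g0 α x y * exp (-(b * y)) =
      2 / √(2 * α) * sinh (√(2 * α) * x) * (exp (-(√(2 * α) * y)) * exp (-(b * y))) := by
  rw [g0_of_ge (le_of_lt hy)]
  ring

lemma integrableOn_Ioi_g0_mul_exp_neg (h : 0 < √(2 * α) + b) :
    IntegrableOn (fun y ↦ g0 α x y * exp (-(b * y))) (Ioi x) :=
  (integrableOn_congr_fun (fun _ hy ↦ g0_mul_exp_neg_of_mem_Ioi hy) measurableSet_Ioi).2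
    ((integrableOn_exp_neg_mul_exp_neg h).const_mul _)

lemma setIntegral_Ioi_g0_mul_exp_neg (h : 0 < √(2 * α) + b) :
    ∫ y in Ioi x, g0 α x y * exp (-(b * y)) =
      2 / √(2 * α) * sinh (√(2 * α) * x) *
        (exp (-(√(2 * α) * x)) * exp (-(b * x)) / (√(2 * α) + b)) := by
  rw [setIntegral_congr_fun measurableSet_Ioi fun _ hy ↦ g0_mul_exp_neg_of_mem_Ioi hy,
    integral_const_mul, integral_Ioi_exp_neg_mul_exp_neg h]

theorem G0_exp_neg (hα : 0 < α) (hb : 0 ≤ b) (hαb : 2 * α ≠ b ^ 2) (hx : 0 ≤ x) :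
    G0 α (fun y ↦ exp (-(b * y))) x =
      2 * (exp (-(b * x)) - exp (-(√(2 * α) * x))) / (2 * α - b ^ 2) := by
  have hsb : 0 < √(2 * α) + b := by positivity
  have hsq := sq_sqrt_two_mul hα.le
  have hdiff : 2 * α - b ^ 2 = (√(2 * α) + b) * (√(2 * α) - b) := by
    rw [← sq_sub_sq, hsq]
  have hint_Ioc : IntegrableOn (fun y ↦ g0 α x y * exp (-(b * y))) (Ioc 0 x) :=
    (continuous_g0.mul (by fun_prop)).integrableOn_Ioc
  rw [G0, ← Ioc_union_Ioi_eq_Ioi hx, setIntegral_union Ioc_disjoint_Ioi_same measurableSet_Ioi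
      hint_Ioc (integrableOn_Ioi_g0_mul_exp_neg hsb),
    setIntegral_Ioc_g0_mul_exp_neg (hsq.trans_ne hαb) hx, setIntegral_Ioi_g0_mul_exp_neg hsb, hsq,
    hdiff]
  have hdiff0 : √(2 * α) - b ≠ 0 := right_ne_zero_of_mul (hdiff ▸ sub_ne_zero.2 hαb)
  have hcosh_sinh : exp (-(√(2 * α) * x)) * (cosh (√(2 * α) * x) + sinh (√(2 * α) * x)) = 1 := by
    rw [cosh_add_sinh, ← exp_add, neg_add_cancel, exp_zero]
  field_simp
  rw [mul_comm x b]
  linear_combination √(2 * α) * exp (-(b * x)) * hcosh_sinh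

end KilledResolvent

section Resolvent

open Set

/-- The numerator of the resolvent at `0`, `R_α h(0)`, of the Feller's Brownian motion with boundary
parameters `(p₁, p₂, p₃, μ)`. -/
noncomputable def resolventNum (p₂ p₃ : ℝ) (μ : Measure ℝ) (α : ℝ) (h : ℝ → ℝ) : ℝ :=
  2 * p₂ * (∫ x in Ioi 0, exp (-(√(2 * α) * x)) * h x) + p₃ * h 0 + ∫ x in Ioi 0, G0 α h x ∂μ

/-- The denominator of the resolvent at `0`, `R_α h(0)`, of the Feller's Brownian motion with
boundary parameters `(p₁, p₂, p₃, μ)`. -/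
noncomputable def resolventDen (p₁ p₂ p₃ : ℝ) (μ : Measure ℝ) (α : ℝ) : ℝ :=
  p₁ + √(2 * α) * p₂ + α * p₃ + laplaceExponent μ √(2 * α)

/-- Normalized boundary parameters: an admissible quadruple except that `p₂ = p₃ = 0` may occur with
a finite measure `μ`. The condition `∫ min(1,x) μ(dx) < ∞` is phrased as Bochner integrability. -/
structure IsNormalizedQuadruple (p₁ p₂ p₃ : ℝ) (μ : Measure ℝ) : Prop where
  nonneg₁ : 0 ≤ p₁
  nonneg₂ : 0 ≤ p₂
  nonneg₃ : 0 ≤ p₃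
  measure_Iic_zero : μ (Iic 0) = 0
  integrableOn : IntegrableOn (fun x ↦ min x 1) (Ioi 0) μ
  sum_eq_one : p₁ + p₂ + p₃ + ∫ x in Ioi 0, min x 1 ∂μ = 1

variable {p₁ p₂ p₃ q₁ q₂ q₃ α γ : ℝ} {μ ν : Measure ℝ}

theorem IsAdmissible.isNormalizedQuadruple (h : IsAdmissible p₁ p₂ p₃ μ) :
    IsNormalizedQuadruple p₁ p₂ p₃ μ := by
  obtain ⟨nonneg₁, nonneg₂, nonneg₃, measure_Iic_zero, hlintegral, sum_eq_one, -⟩ := h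
  refine ⟨nonneg₁, nonneg₂, nonneg₃, measure_Iic_zero, ⟨by fun_prop, ?_⟩, sum_eq_one⟩
  rw [hasFiniteIntegral_iff_ofReal]
  · simpa only [min_comm] using hlintegral
  · filter_upwards [ae_restrict_mem measurableSet_Ioi] with x hx
    exact le_min (le_of_lt hx) zero_le_one

theorem IsNormalizedQuadruple.restrict_Ioi_eq_self (h : IsNormalizedQuadruple p₁ p₂ p₃ μ) :
    μ.restrict (Ioi 0) = μ := by
  refine Measure.restrict_eq_self_of_ae_mem ?_
  rw [ae_iff]
  simpa [Iic] using h.measure_Iic_zero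

theorem IsNormalizedQuadruple.resolventDen_pos (h : IsNormalizedQuadruple p₁ p₂ p₃ μ)
    (hα : 0 < α) : 0 < resolventDen p₁ p₂ p₃ μ α := by
  obtain ⟨hp₁, hp₂, hp₃, -, hμ, hsum⟩ := h
  have hexp : 0 < 1 - exp (-√(2 * α)) := by simpa using hα
  have hmass : 0 ≤ ∫ x in Ioi 0, min x 1 ∂μ :=
    setIntegral_nonneg measurableSet_Ioi fun x hx ↦ le_min (le_of_lt hx) zero_le_one
  have hpos : 0 < p₁ ∨ 0 < p₂ ∨ 0 < p₃ ∨ 0 < ∫ x in Ioi 0, min x 1 ∂μ := by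
    by_contra! hneg
    linarith
  calc 0 < p₁ + √(2 * α) * p₂ + α * p₃ + (1 - exp (-√(2 * α))) * ∫ x in Ioi 0, min x 1 ∂μ := by
        rcases hpos with hpos | hpos | hpos | hpos <;> positivity
    _ ≤ resolventDen p₁ p₂ p₃ μ α := by
        rw [resolventDen]
        gcongr
        exact le_laplaceExponent hμ (sqrt_nonneg _)

lemma resolventDen_smul (c : NNReal) :
    resolventDen (c * p₁) (c * p₂) (c * p₃) (c • μ) α = c * resolventDen p₁ p₂ p₃ μ α := by
  simp only [resolventDen, laplaceExponent_smul]
  ring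

theorem resolventNum_exp_neg (hμ : IntegrableOn (fun x ↦ min x 1) (Ioi 0) μ) (hα : 0 < α)
    (hγ : 0 < γ) (hαγ : α ≠ γ) :
    resolventNum p₂ p₃ μ α (fun x ↦ exp (-(√(2 * γ) * x))) =
      (resolventDen p₁ p₂ p₃ μ α - resolventDen p₁ p₂ p₃ μ γ) / (α - γ) := by
  have hαγ0 : α - γ ≠ 0 := sub_ne_zero.2 hαγ
  have hsum : 0 < √(2 * α) + √(2 * γ) := by positivity
  have hdiff : (√(2 * α) - √(2 * γ)) * (√(2 * α) + √(2 * γ)) = 2 * (α - γ) := by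
    linear_combination sq_sqrt_two_mul hα.le - sq_sqrt_two_mul hγ.le
  have hreflect : 2 * p₂ * (∫ x in Ioi 0, exp (-(√(2 * α) * x)) * exp (-(√(2 * γ) * x))) =
      (√(2 * α) * p₂ - √(2 * γ) * p₂) / (α - γ) := by
    rw [integral_Ioi_exp_neg_mul_exp_neg hsum, eq_div_iff hαγ0]
    simp only [mul_zero, neg_zero, exp_zero]
    field_simp
    linear_combination (-p₂) * hdiff
  have hne : 2 * α ≠ √(2 * γ) ^ 2 := by
    rw [sq_sqrt_two_mul hγ.le]
    exact fun h ↦ hαγ (mul_left_cancel₀ two_ne_zero h)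
  have hjump : ∫ x in Ioi 0, G0 α (fun y ↦ exp (-(√(2 * γ) * y))) x ∂μ =
      (laplaceExponent μ √(2 * α) - laplaceExponent μ √(2 * γ)) / (α - γ) := by
    rw [laplaceExponent, laplaceExponent,
      ← integral_sub (integrableOn_one_sub_exp_neg_mul hμ (sqrt_nonneg _))
        (integrableOn_one_sub_exp_neg_mul hμ (sqrt_nonneg _)), ← integral_div]
    refine setIntegral_congr_fun measurableSet_Ioi fun x hx ↦ ?_
    rw [G0_exp_neg hα (sqrt_nonneg _) hne (le_of_lt hx), sq_sqrt_two_mul hγ.le]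
    field_simp
    ring
  rw [resolventNum, hreflect, hjump]
  simp only [resolventDen, mul_zero, neg_zero, exp_zero]
  field_simp
  ring

lemma tendsto_sqrt_two_mul_atTop : Tendsto (fun α ↦ √(2 * α)) atTop atTop :=
  tendsto_sqrt_atTop.comp (tendsto_id.const_mul_atTop two_pos)

lemma tendsto_sqrt_two_mul_nhdsGT_zero : Tendsto (fun α ↦ √(2 * α)) (𝓝[>] 0) (𝓝[>] 0) := by
  refine tendsto_nhdsWithin_iff.2 ⟨?_, ?_⟩
  · have hcont : Continuous fun α ↦ √(2 * α) := by fun_prop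
    simpa using (hcont.tendsto 0).mono_left nhdsWithin_le_nhds
  · filter_upwards [self_mem_nhdsWithin] with α hα
    simpa using hα

lemma tendsto_resolventDen_nhdsGT_zero (hμ : IntegrableOn (fun x ↦ min x 1) (Ioi 0) μ) :
    Tendsto (resolventDen p₁ p₂ p₃ μ) (𝓝[>] 0) (𝓝 p₁) := by
  have hcont : Continuous fun α ↦ p₁ + √(2 * α) * p₂ + α * p₃ := by fun_prop
  have hlim := ((hcont.tendsto 0).mono_left nhdsWithin_le_nhds).add
    ((tendsto_laplaceExponent_nhdsGT_zero hμ).comp tendsto_sqrt_two_mul_nhdsGT_zero)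
  simp only [mul_zero, sqrt_zero, zero_mul, add_zero] at hlim
  exact hlim

lemma tendsto_resolventDen_sub_div_sqrt_atTop
    (hμ : IntegrableOn (fun x ↦ min x 1) (Ioi 0) μ) :
    Tendsto (fun α ↦ (resolventDen p₁ p₂ p₃ μ α - α * p₃) / √(2 * α)) atTop (𝓝 p₂) := by
  have hlim : Tendsto (fun s ↦ p₁ / s + p₂ + laplaceExponent μ s / s) atTop (𝓝 (0 + p₂ + 0)) :=
    ((tendsto_const_nhds.div_atTop tendsto_id).add_const p₂).add
      (tendsto_laplaceExponent_div_atTop hμ)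
  rw [zero_add, add_zero] at hlim
  refine (hlim.comp tendsto_sqrt_two_mul_atTop).congr' ?_
  filter_upwards [eventually_gt_atTop 0] with α hα
  have hs : √(2 * α) ≠ 0 := by positivity
  simp only [Function.comp_apply, resolventDen]
  field_simp
  ring

lemma tendsto_resolventDen_div_atTop (hμ : IntegrableOn (fun x ↦ min x 1) (Ioi 0) μ) :
    Tendsto (fun α ↦ resolventDen p₁ p₂ p₃ μ α / α) atTop (𝓝 p₃) := by
  have hlim := ((tendsto_resolventDen_sub_div_sqrt_atTop (p₁ := p₁) (p₂ := p₂) (p₃ := p₃) hμ).mul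
    (tendsto_const_nhds (x := (2 : ℝ)) |>.div_atTop tendsto_sqrt_two_mul_atTop)).add_const p₃
  rw [mul_zero, zero_add] at hlim
  refine hlim.congr' ?_
  filter_upwards [eventually_gt_atTop 0] with α hα
  rw [div_mul_div_comm, ← sq, sq_sqrt_two_mul hα.le]
  field_simp
  ring

theorem eq_of_resolventDen_eq (hμ : IntegrableOn (fun x ↦ min x 1) (Ioi 0) μ)
    (hν : IntegrableOn (fun x ↦ min x 1) (Ioi 0) ν)
    (h : ∀ α, 0 < α → resolventDen p₁ p₂ p₃ μ α = resolventDen q₁ q₂ q₃ ν α) :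
    p₁ = q₁ ∧ p₂ = q₂ ∧ p₃ = q₃ ∧ μ.restrict (Ioi 0) = ν.restrict (Ioi 0) := by
  have h_nhdsGT : resolventDen p₁ p₂ p₃ μ =ᶠ[𝓝[>] 0] resolventDen q₁ q₂ q₃ ν :=
    eventually_nhdsWithin_of_forall h
  have h_atTop : resolventDen p₁ p₂ p₃ μ =ᶠ[atTop] resolventDen q₁ q₂ q₃ ν :=
    (eventually_gt_atTop 0).mono h
  have h₁ : p₁ = q₁ := tendsto_nhds_unique_of_eventuallyEq
    (tendsto_resolventDen_nhdsGT_zero hμ) (tendsto_resolventDen_nhdsGT_zero hν) h_nhdsGT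
  have h₃ : p₃ = q₃ := tendsto_nhds_unique_of_eventuallyEq
    (tendsto_resolventDen_div_atTop (p₁ := p₁) (p₂ := p₂) hμ)
    (tendsto_resolventDen_div_atTop (p₁ := q₁) (p₂ := q₂) hν)
    (h_atTop.mono fun α hα ↦ by simp only [hα])
  have h₂ : p₂ = q₂ := tendsto_nhds_unique_of_eventuallyEq
    (tendsto_resolventDen_sub_div_sqrt_atTop (p₁ := p₁) (p₃ := p₃) hμ)
    (tendsto_resolventDen_sub_div_sqrt_atTop (p₁ := q₁) (p₃ := q₃) hν)
    (h_atTop.mono fun α hα ↦ by simp only [hα, ← h₃])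
  refine ⟨h₁, h₂, h₃, restrict_Ioi_eq_of_laplaceExponent_eq hμ hν fun s hs ↦ ?_⟩
  have hs_eq : √(2 * (s ^ 2 / 2)) = s := by rw [mul_div_cancel₀ _ two_ne_zero, sqrt_sq hs.le]
  have hs_den := h (s ^ 2 / 2) (by positivity)
  simpa only [resolventDen, hs_eq, h₁, h₂, h₃, add_right_inj] using hs_den

theorem IsNormalizedQuadruple.eq_of_resolventDen_eq_mul (hp : IsNormalizedQuadruple p₁ p₂ p₃ μ)
    (hq : IsNormalizedQuadruple q₁ q₂ q₃ ν) {c : NNReal}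
    (h : ∀ α, 0 < α → resolventDen p₁ p₂ p₃ μ α = c * resolventDen q₁ q₂ q₃ ν α) :
    p₁ = q₁ ∧ p₂ = q₂ ∧ p₃ = q₃ ∧ μ = ν := by
  have hν : IntegrableOn (fun x ↦ min x 1) (Ioi 0) (c • ν) := by
    rw [IntegrableOn, Measure.restrict_smul]
    exact hq.integrableOn.smul_measure_nnreal
  obtain ⟨h₁, h₂, h₃, h₄⟩ := eq_of_resolventDen_eq (q₁ := c * q₁) (q₂ := c * q₂) (q₃ := c * q₃)
    hp.integrableOn hν fun α hα ↦ by rw [h α hα, resolventDen_smul]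
  rw [Measure.restrict_smul, hp.restrict_Ioi_eq_self, hq.restrict_Ioi_eq_self] at h₄
  have hc : c = 1 := by
    have hsum := hp.sum_eq_one
    rw [h₁, h₂, h₃, h₄, Measure.restrict_smul, integral_smul_nnreal_measure, NNReal.smul_def,
      smul_eq_mul, ← mul_add, ← mul_add, ← mul_add, hq.sum_eq_one, mul_one] at hsum
    exact_mod_cast hsum
  rw [hc, NNReal.coe_one, one_mul] at h₁ h₂ h₃
  rw [hc, one_smul] at h₄
  exact ⟨h₁, h₂, h₃, h₄⟩

lemma memC0_exp_neg {b : ℝ} (hb : 0 < b) : MemC0 fun x ↦ exp (-(b * x)) :=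
  ⟨by fun_prop, tendsto_exp_neg_atTop_nhds_zero.comp (tendsto_id.const_mul_atTop hb)⟩

theorem stmt12_general (hp : IsNormalizedQuadruple p₁ p₂ p₃ μ)
    (hq : IsNormalizedQuadruple q₁ q₂ q₃ ν) (hγ : 0 < γ)
    (hid : ∀ α, 0 < α →
      resolventNum p₂ p₃ μ α (fun x ↦ exp (-(√(2 * γ) * x))) * resolventDen q₁ q₂ q₃ ν α =
        resolventNum q₂ q₃ ν α (fun x ↦ exp (-(√(2 * γ) * x))) * resolventDen p₁ p₂ p₃ μ α) :
    p₁ = q₁ ∧ p₂ = q₂ ∧ p₃ = q₃ ∧ μ = ν := by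
  have hDp := hp.resolventDen_pos hγ
  have hDq := hq.resolventDen_pos hγ
  lift resolventDen p₁ p₂ p₃ μ γ / resolventDen q₁ q₂ q₃ ν γ to NNReal using (by positivity)
    with c hc
  refine hp.eq_of_resolventDen_eq_mul hq (c := c) fun α hα ↦ ?_
  rw [hc, div_mul_eq_mul_div, eq_div_iff hDq.ne']
  rcases eq_or_ne α γ with rfl | hαγ
  · rfl
  · have hcross := hid α hα
    rw [resolventNum_exp_neg (p₁ := p₁) hp.integrableOn hα hγ hαγ,
      resolventNum_exp_neg (p₁ := q₁) hq.integrableOn hα hγ hαγ] at hcross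
    field_simp [sub_ne_zero.2 hαγ] at hcross
    linarith

end Resolvent

/-- Uniqueness of the four boundary parameters of a Feller's Brownian motion:
if two admissible quadruples satisfy the cross-multiplied resolvent identity for
all `α > 0` and all `h ∈ C₀([0,∞))`, then they coincide. -/
theorem stmt12 (p₁ p₂ p₃ : ℝ) (p₄ : Measure ℝ) (q₁ q₂ q₃ : ℝ) (q₄ : Measure ℝ)
    (hp : IsAdmissible p₁ p₂ p₃ p₄) (hq : IsAdmissible q₁ q₂ q₃ q₄)
    (hid : ∀ α : ℝ, 0 < α → ∀ h : ℝ → ℝ, MemC0 h →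
      (2 * p₂ * (∫ x in Set.Ioi (0 : ℝ), Real.exp (-(Real.sqrt (2 * α) * x)) * h x) +
          p₃ * h 0 + ∫ x in Set.Ioi (0 : ℝ), G0 α h x ∂p₄) *
        (q₁ + Real.sqrt (2 * α) * q₂ + α * q₃ +
          ∫ x in Set.Ioi (0 : ℝ), (1 - Real.exp (-(Real.sqrt (2 * α) * x))) ∂q₄) =
      (2 * q₂ * (∫ x in Set.Ioi (0 : ℝ), Real.exp (-(Real.sqrt (2 * α) * x)) * h x) +
          q₃ * h 0 + ∫ x in Set.Ioi (0 : ℝ), G0 α h x ∂q₄) *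
        (p₁ + Real.sqrt (2 * α) * p₂ + α * p₃ +
          ∫ x in Set.Ioi (0 : ℝ), (1 - Real.exp (-(Real.sqrt (2 * α) * x))) ∂p₄)) :
    p₁ = q₁ ∧ p₂ = q₂ ∧ p₃ = q₃ ∧ p₄ = q₄ :=
  stmt12_general hp.isNormalizedQuadruple hq.isNormalizedQuadruple one_pos fun α hα ↦
    hid α hα _ (memC0_exp_neg (by positivity))
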